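/- arXiv:2003.02236 — 2 statements merged into one kernel-verified Lean document; each statement's English description precedes it below -/
import Mathlib

section
/- Let m ∈ ℕ and let B, P, Q be m × m real matrices with B orthogonal, i.e. Bᵀ * B = 1 and B * Bᵀ = 1. Set C = Bᵀ * P * B and D = Bᵀ * Q * B. If Q * P = 1, then for every k ≤ m, the product of the first k rows of D with the first k columns of C equals the k × k identity matrix: D_{k*} * C_{*k} = 1. -/
open Matrix

section

variable {R l m n : Type*} [Semiring R] [Fintype m] [DecidableEq n]

theorem submatrix_mul_submatrix_eq_one_of_mul_eq_one [DecidableEq l]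
    {D : Matrix n m R} {C : Matrix m n R} (hDC : D * C = 1)
    {e : l → n} (he : Function.Injective e) :
    D.submatrix e id * C.submatrix id e = 1 := by
  rw [← submatrix_mul D C e id e Function.bijective_id, hDC, submatrix_one e he]

variable [DecidableEq m] [Fintype n]

theorem conj_mul_conj_eq_one_of_mul_eq_one {S : Matrix n m R} {T : Matrix m n R}
    (hST : S * T = 1) (hTS : T * S = 1) {P Q : Matrix m m R} (hQP : Q * P = 1) :
    S * Q * T * (S * P * T) = 1 :=
  calc
    S * Q * T * (S * P * T) = S * (Q * (T * S * P)) * T := by simp only [Matrix.mul_assoc]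
    _ = S * (Q * P) * T := by rw [hTS, Matrix.one_mul]
    _ = 1 := by rw [hQP, Matrix.mul_one, hST]

theorem prop2_forward_general [DecidableEq l] {S : Matrix n m R} {T : Matrix m n R}
    {P Q : Matrix m m R} {C D : Matrix n n R} (hST : S * T = 1) (hTS : T * S = 1)
    (hC : C = S * P * T) (hD : D = S * Q * T) (hQP : Q * P = 1)
    {e : l → n} (he : Function.Injective e) :
    D.submatrix e id * C.submatrix id e = 1 := by
  have hDC : D * C = 1 := by
    rw [hC, hD]
    exact conj_mul_conj_eq_one_of_mul_eq_one hST hTS hQP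
  exact submatrix_mul_submatrix_eq_one_of_mul_eq_one hDC he

end

/-- **Proposition 2 (forward direction).**
If `B` is orthogonal, `C = Bᵀ P B`, `D = Bᵀ Q B` and `Q * P = 1`, then for every
`k ≤ m`, the product of the first `k` rows of `D` with the first `k` columns of `C`
is the `k × k` identity matrix. -/
theorem prop2_forward {m : ℕ} (B P Q C D : Matrix (Fin m) (Fin m) ℝ)
    (hB1 : Bᵀ * B = 1) (hB2 : B * Bᵀ = 1)
    (hC : C = Bᵀ * P * B) (hD : D = Bᵀ * Q * B)
    (hQP : Q * P = 1) :
    ∀ (k : ℕ) (hk : k ≤ m),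
      D.submatrix (Fin.castLE hk) id * C.submatrix id (Fin.castLE hk) = 1 := by
  intro k hk
  exact prop2_forward_general hB1 hB2 hC hD hQP (Fin.castLE_injective hk)
end

section
/- Let m ≥ 1 and let B, P, Q be m × m real matrices with B orthogonal, i.e. Bᵀ * B = 1 and B * Bᵀ = 1. Set C = Bᵀ * P * B and D = Bᵀ * Q * B. Then Q * P = 1 if and only if ∑_{k=1}^{m} (1/(2k)) · ‖D_{k*} * C_{*k} − I_k‖_F² = 0, where D_{k*} is the matrix of the first k rows of D, C_{*k} is the matrix of the first k columns of C, I_k is the k × k identity matrix, and ‖·‖_F is the Frobenius norm. -/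
open Matrix

/-- The Frobenius norm of a real matrix: the square root of the sum of the
squares of its entries. -/
noncomputable def frobeniusNorm {a b : ℕ} (A : Matrix (Fin a) (Fin b) ℝ) : ℝ :=
  Real.sqrt (∑ i, ∑ j, (A i j) ^ 2)

open scoped Matrix.Norms.Frobenius in
theorem frobeniusNorm_eq_norm {a b : ℕ} (A : Matrix (Fin a) (Fin b) ℝ) :
    frobeniusNorm A = ‖A‖ := by
  simp [frobeniusNorm, frobenius_norm_def, Real.sqrt_eq_rpow]

open scoped Matrix.Norms.Frobenius in
theorem frobeniusNorm_eq_zero_iff {a b : ℕ} {A : Matrix (Fin a) (Fin b) ℝ} :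
    frobeniusNorm A = 0 ↔ A = 0 := by
  rw [frobeniusNorm_eq_norm, norm_eq_zero]

theorem sum_mul_sq_eq_zero_iff_of_pos {ι R : Type*} [Ring R] [LinearOrder R]
    [IsStrictOrderedRing R] {s : Finset ι} {w f : ι → R} (hw : ∀ i ∈ s, 0 < w i) :
    ∑ i ∈ s, w i * f i ^ 2 = 0 ↔ ∀ i ∈ s, f i = 0 := by
  have hterm : ∀ i ∈ s, w i * f i ^ 2 = 0 ↔ f i = 0 := fun i hi => by
    rw [mul_eq_zero, or_iff_right (hw i hi).ne', sq_eq_zero_iff]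
  rw [Finset.sum_eq_zero_iff_of_nonneg fun i hi => mul_nonneg (hw i hi).le (sq_nonneg _)]
  exact forall₂_congr hterm

theorem units_conj_mul_conj_eq_one_iff {M : Type*} [Monoid M] (u : Mˣ) (x y : M) :
    ↑u⁻¹ * x * ↑u * (↑u⁻¹ * y * ↑u) = 1 ↔ x * y = 1 := by
  calc ↑u⁻¹ * x * ↑u * (↑u⁻¹ * y * ↑u) = 1
      ↔ ↑u⁻¹ * (x * y * ↑u) = 1 := by simp only [mul_assoc, Units.mul_inv_cancel_left]
    _ ↔ x * y * ↑u = 1 * ↑u := by rw [Units.inv_mul_eq_one, one_mul, eq_comm]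
    _ ↔ x * y = 1 := Units.mul_left_inj u

section LeadingBlock

variable {m : ℕ} {α : Type*}

/-- The leading principal block of a square matrix indexed by `k : Fin m`. Since `k` counts from
zero, this block has size `k + 1`. -/
def leadingBlock (k : Fin m) (A : Matrix (Fin m) (Fin m) α) :
    Matrix (Fin (k + 1)) (Fin (k + 1)) α :=
  A.submatrix (Fin.castLE k.isLt) (Fin.castLE k.isLt)

theorem leadingBlock_one [Zero α] [One α] (k : Fin m) :
    leadingBlock k (1 : Matrix (Fin m) (Fin m) α) = 1 :=
  submatrix_one _ (Fin.castLE_injective k.isLt)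

theorem leadingBlock_mul {n : Type*} [Fintype n] [Mul α] [AddCommMonoid α] (k : Fin m)
    (A : Matrix (Fin m) n α) (B : Matrix n (Fin m) α) :
    leadingBlock k (A * B) =
      A.submatrix (Fin.castLE k.isLt) id * B.submatrix id (Fin.castLE k.isLt) :=
  submatrix_mul A B _ id _ Function.bijective_id

theorem eq_iff_forall_leadingBlock_eq {A B : Matrix (Fin m) (Fin m) α} :
    A = B ↔ ∀ k, leadingBlock k A = leadingBlock k B := by
  refine ⟨fun h k => congrArg (leadingBlock k) h, fun h => ?_⟩
  ext i j
  have hi : (i : ℕ) < (max i j : Fin m) + 1 := Nat.lt_succ_of_le (le_max_left i j)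
  have hj : (j : ℕ) < (max i j : Fin m) + 1 := Nat.lt_succ_of_le (le_max_right i j)
  exact congrFun₂ (h (max i j)) ⟨i, hi⟩ ⟨j, hj⟩

theorem mul_eq_one_iff_forall_leading_submatrix_mul_eq_one {n : Type*} [Fintype n]
    [NonAssocSemiring α] {A : Matrix (Fin m) n α} {B : Matrix n (Fin m) α} :
    A * B = 1 ↔ ∀ k : Fin m,
      A.submatrix (Fin.castLE k.isLt) id * B.submatrix id (Fin.castLE k.isLt) = 1 := by
  simp only [eq_iff_forall_leadingBlock_eq (A := A * B), leadingBlock_mul, leadingBlock_one]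

end LeadingBlock

theorem prop2_full_general {m : ℕ} {w : Fin m → ℝ} (hw : ∀ k, 0 < w k)
    (B : (Matrix (Fin m) (Fin m) ℝ)ˣ) {P Q C D : Matrix (Fin m) (Fin m) ℝ}
    (hC : C = B⁻¹.val * P * B.val) (hD : D = B⁻¹.val * Q * B.val) :
    Q * P = 1 ↔
      ∑ k : Fin m, w k *
        (frobeniusNorm
          (D.submatrix (Fin.castLE k.isLt) id *
            C.submatrix id (Fin.castLE k.isLt) - 1)) ^ 2 = 0 := by
  rw [sum_mul_sq_eq_zero_iff_of_pos fun k _ => hw k]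
  simp only [Finset.mem_univ, true_imp_iff, frobeniusNorm_eq_zero_iff, sub_eq_zero]
  rw [← mul_eq_one_iff_forall_leading_submatrix_mul_eq_one, hC, hD,
    units_conj_mul_conj_eq_one_iff]

/-- **Proposition 2 of the paper.**
For `m ≥ 1`, `B` orthogonal, `C = Bᵀ P B`, `D = Bᵀ Q B`, consistency `Q * P = 1`
holds iff `∑_{k=1}^{m} (1/(2k)) ‖D_{k*} C_{*k} - I_k‖_F² = 0`. -/
theorem prop2_full {m : ℕ} (hm : 1 ≤ m) (B P Q C D : Matrix (Fin m) (Fin m) ℝ)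
    (hB1 : Bᵀ * B = 1) (hB2 : B * Bᵀ = 1)
    (hC : C = Bᵀ * P * B) (hD : D = Bᵀ * Q * B) :
    Q * P = 1 ↔
      ∑ k : Fin m, (1 / (2 * ((k : ℕ) + 1 : ℝ))) *
        (frobeniusNorm
          (D.submatrix (Fin.castLE k.isLt) id *
            C.submatrix id (Fin.castLE k.isLt) - 1)) ^ 2 = 0 :=
  prop2_full_general (fun k => by positivity) ⟨B, Bᵀ, hB2, hB1⟩ hC hD
end
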